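/- Let τ = (1 + √5)/2 and let p ∈ {4, 5, 10}. Then the lattice S(p,τ) is generated by the union of two mirror stabilizers: the subgroup of GL(3,ℂ) generated by Stab(m₁) ∪ Stab(m₂) equals S(p,τ), where m₁ is the mirror of the complex reflection R₁ and m₂ = span_ℂ{e₁, e₃} is the mirror of the complex reflection (R₁R₃)⁵. -/

import Mathlib

open Matrix

noncomputable section

/-- `u = exp(2πi/(3p))`. -/
def uPar (p : ℕ) : ℂ := Complex.exp (2 * Real.pi * Complex.I / (3 * p))

/-- `α = 2 − u³ − conj(u)³`. -/
def alphaPar (p : ℕ) : ℂ :=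
  2 - uPar p ^ 3 - starRingEnd ℂ (uPar p) ^ 3

/-- `β = (conj(u)² − u)·τ`. -/
def betaPar (p : ℕ) (τ : ℂ) : ℂ := (starRingEnd ℂ (uPar p) ^ 2 - uPar p) * τ

/-- The generator `R₁` of `S(p,τ)`. -/
def R1S (p : ℕ) (τ : ℂ) : Matrix (Fin 3) (Fin 3) ℂ :=
  !![uPar p ^ 2, τ, -(uPar p) * starRingEnd ℂ τ;
     0, starRingEnd ℂ (uPar p), 0;
     0, 0, starRingEnd ℂ (uPar p)]

/-- The reflection `R₂ = J·R₁·J⁻¹` of `S(p,τ)`. -/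
def R2S (p : ℕ) (τ : ℂ) : Matrix (Fin 3) (Fin 3) ℂ :=
  !![starRingEnd ℂ (uPar p), 0, 0;
     -(uPar p) * starRingEnd ℂ τ, uPar p ^ 2, τ;
     0, 0, starRingEnd ℂ (uPar p)]

/-- The reflection `R₃ = J·R₂·J⁻¹` of `S(p,τ)`. -/
def R3S (p : ℕ) (τ : ℂ) : Matrix (Fin 3) (Fin 3) ℂ :=
  !![starRingEnd ℂ (uPar p), 0, 0;
     0, starRingEnd ℂ (uPar p), 0;
     τ, -(uPar p) * starRingEnd ℂ τ, uPar p ^ 2]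

/-- The cyclic permutation matrix `J`. -/
def Jmat : Matrix (Fin 3) (Fin 3) ℂ :=
  !![0, 0, 1; 1, 0, 0; 0, 1, 0]

/-- The linear functional `x ↦ a·x₁ + b·x₂ + c·x₃` on `ℂ³`. -/
def lfun (a b c : ℂ) : (Fin 3 → ℂ) →ₗ[ℂ] ℂ :=
  a • (LinearMap.proj 0 : (Fin 3 → ℂ) →ₗ[ℂ] ℂ) +
    b • (LinearMap.proj 1 : (Fin 3 → ℂ) →ₗ[ℂ] ℂ) +
    c • (LinearMap.proj 2 : (Fin 3 → ℂ) →ₗ[ℂ] ℂ)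

/-- The mirror of `R₁`: `{x ∈ ℂ³ : α·x₁ + β·x₂ + conj(β)·x₃ = 0}`,
the `H`-orthogonal complement of `e₁`. -/
def mirror1 (p : ℕ) (τ : ℂ) : Submodule ℂ (Fin 3 → ℂ) :=
  LinearMap.ker (lfun (alphaPar p) (betaPar p τ) (starRingEnd ℂ (betaPar p τ)))

/-- The stabilizer of a subspace `m` of `ℂ³` inside a subgroup `S` of `GL(3,ℂ)`:
the set of elements of `S` mapping `m` onto itself. -/
def mirrorStab (S : Subgroup (GL (Fin 3) ℂ)) (m : Submodule ℂ (Fin 3 → ℂ)) :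
    Set (GL (Fin 3) ℂ) :=
  {g | g ∈ S ∧ m.map (Matrix.mulVecLin (g : Matrix (Fin 3) (Fin 3) ℂ)) = m}

end

/-!
`J` conjugates `R₃` to `R₁`, and for odd braid length `2n + 1` the element `(R₁R₃)ⁿ` conjugates
`R₁` to `R₃`. Hence `J(R₁R₃)ⁿ` commutes with `R₁` and preserves its mirror `m₁`, which is an
eigenspace of `R₁`. On the other hand `R₁` and `R₃` preserve `m₂`, so both stabilizers together
generate `R₁` and `J`. For the golden ratio the braid length is `5`: writing `R₁` and `R₃` as
scalars plus rank one matrices `A` and `B`, the braid relation reduces to a scalar identity via the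
Temperley–Lieb type relations `ABA = κA` and `BAB = κB`.
-/

section General

theorem map_mulVecLin_eq_of_le {n K : Type*} [Fintype n] [DecidableEq n] [Field K] (g : GL n K)
    {m : Submodule K (n → K)} (h : m.map (g : Matrix n n K).mulVecLin ≤ m) :
    m.map (g : Matrix n n K).mulVecLin = m :=
  Submodule.eq_of_le_of_finrank_eq h
    (Submodule.equivMapOfInjective _ (mulVec_injective_of_isUnit g.isUnit) m).finrank_eq.symm

theorem map_eigenspace_le_of_commute {n K : Type*} [Fintype n] [CommRing K]
    {A B : Matrix n n K} (h : Commute A B) (μ : K) :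
    (Module.End.eigenspace B.mulVecLin μ).map A.mulVecLin ≤
      Module.End.eigenspace B.mulVecLin μ := by
  have hlin : Commute B.mulVecLin A.mulVecLin := by
    rw [commute_iff_eq, Module.End.mul_eq_comp, Module.End.mul_eq_comp, ← mulVecLin_mul,
      ← mulVecLin_mul, h.eq]
  exact Submodule.map_le_iff_le_comap.2 (Module.End.mapsTo_genEigenspace_of_comm hlin μ 1)

theorem map_span_single_zero_two_le {K : Type*} [CommSemiring K]
    {A : Matrix (Fin 3) (Fin 3) K} (h0 : A 1 0 = 0) (h2 : A 1 2 = 0) :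
    (Submodule.span K {Pi.single 0 1, Pi.single 2 1}).map A.mulVecLin ≤
      Submodule.span K {Pi.single 0 1, Pi.single 2 1} := by
  rw [Submodule.map_span_le]
  have hcol (i : Fin 3) (hi : A 1 i = 0) :
      A.mulVecLin (Pi.single i 1) ∈ Submodule.span K {Pi.single 0 1, Pi.single 2 1} := by
    rw [mulVecLin_apply, mulVec_single_one, Submodule.mem_span_pair]
    refine ⟨A 0 i, A 2 i, ?_⟩
    ext l
    fin_cases l <;> simp [hi]
  rintro _ (rfl | rfl)
  exacts [hcol 0 h0, hcol 2 h2]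

theorem vecMulVec_mul_self {n K : Type*} [Fintype n] [CommSemiring K] (e f : n → K) :
    vecMulVec e f * vecMulVec e f = (f ⬝ᵥ e) • vecMulVec e f := by
  rw [vecMulVec_mul_vecMulVec, vecMulVec_smul]

theorem vecMulVec_mul_vecMulVec_mul_self {m n K : Type*} [Fintype m] [Fintype n]
    [CommSemiring K] (e : m → K) (f e' : n → K) (f' : m → K) :
    vecMulVec e f * vecMulVec e' f' * vecMulVec e f =
      ((f ⬝ᵥ e') * (f' ⬝ᵥ e)) • vecMulVec e f := by
  rw [vecMulVec_mul_vecMulVec, vecMulVec_smul, smul_mul, vecMulVec_mul_vecMulVec,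
    vecMulVec_smul, smul_smul]

theorem semiconjBy_mul_sq_of_temperleyLieb {k A : Type*} [CommRing k] [Ring A] [Algebra k A]
    {a b : A} {c d κ : k} (haa : a * a = d • a) (hbb : b * b = d • b) (haba : a * b * a = κ • a)
    (hbab : b * a * b = κ • b) (h : κ ^ 2 + 3 * c * (c + d) * κ + (c * (c + d)) ^ 2 = 0) :
    SemiconjBy (((c • 1 + a) * (c • 1 + b)) ^ 2) (c • 1 + a) (c • 1 + b) := by
  have haa_mul (x : A) : a * (a * x) = d • (a * x) := by rw [← mul_assoc, haa, smul_mul_assoc]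
  have hbb_mul (x : A) : b * (b * x) = d • (b * x) := by rw [← mul_assoc, hbb, smul_mul_assoc]
  rw [mul_assoc] at haba hbab
  rw [SemiconjBy]
  simp only [pow_two, mul_add, add_mul, mul_assoc, smul_mul_assoc, mul_smul_comm, one_mul, mul_one,
    smul_add, haa, hbb, haba, hbab, haa_mul, hbb_mul]
  -- `h` is the vanishing of the coefficient of `a - b` in the difference of the two sides.
  linear_combination (norm := module) h • (a - b)

end General

section Parameter

theorem isPrimitiveRoot_uPar {p : ℕ} (hp : p ≠ 0) : IsPrimitiveRoot (uPar p) (3 * p) := by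
  simpa [uPar] using Complex.isPrimitiveRoot_exp (3 * p) (by omega)

theorem uPar_mul_conj {p : ℕ} (hp : p ≠ 0) : uPar p * starRingEnd ℂ (uPar p) = 1 := by
  have hnorm : ‖uPar p‖ = 1 := (isPrimitiveRoot_uPar hp).norm'_eq_one (by omega)
  rw [Complex.mul_conj', hnorm]
  norm_num

theorem conj_sq_ne_uPar {p : ℕ} (hp : 2 ≤ p) : starRingEnd ℂ (uPar p) ^ 2 ≠ uPar p := by
  intro h
  have huv := uPar_mul_conj (p := p) (by omega)
  have hcube : uPar p ^ 3 = 1 := by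
    linear_combination (uPar p * starRingEnd ℂ (uPar p) + 1) * huv - uPar p ^ 2 * h
  have hdvd := (isPrimitiveRoot_uPar (p := p) (by omega)).dvd_of_pow_eq_one 3 hcube
  exact absurd (Nat.le_of_dvd (by norm_num) hdvd) (by omega)

end Parameter

section Reflections

variable (p : ℕ) (τ : ℂ)

/-- The row `f₁` of the linear form for which `R₁ = ū + e₁ ⊗ f₁`; it is proportional to the first
row `(α, β, β̄)` of the Hermitian form. -/
noncomputable def coroot1 : Fin 3 → ℂ :=
  ![uPar p ^ 2 - starRingEnd ℂ (uPar p), τ, -(uPar p) * starRingEnd ℂ τ]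

/-- The row `f₃` of the linear form for which `R₃ = ū + e₃ ⊗ f₃`. -/
noncomputable def coroot3 : Fin 3 → ℂ :=
  ![τ, -(uPar p) * starRingEnd ℂ τ, uPar p ^ 2 - starRingEnd ℂ (uPar p)]

theorem R1S_eq_smul_one_add_vecMulVec :
    R1S p τ = starRingEnd ℂ (uPar p) • 1 + vecMulVec (Pi.single 0 1) (coroot1 p τ) := by
  ext i k
  fin_cases i <;> fin_cases k <;> simp [R1S, coroot1]

theorem R3S_eq_smul_one_add_vecMulVec :
    R3S p τ = starRingEnd ℂ (uPar p) • 1 + vecMulVec (Pi.single 2 1) (coroot3 p τ) := by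
  ext i k
  fin_cases i <;> fin_cases k <;> simp [R3S, coroot3]

theorem semiconjBy_Jmat_R3S_R1S : SemiconjBy Jmat (R3S p τ) (R1S p τ) := by
  simp [SemiconjBy, Jmat, R3S, R1S]

variable {p τ}

theorem semiconjBy_R1S_mul_R3S_sq (hp : p ≠ 0)
    (hτ : Complex.normSq τ ^ 2 = 3 * Complex.normSq τ - 1) :
    SemiconjBy ((R1S p τ * R3S p τ) ^ 2) (R1S p τ) (R3S p τ) := by
  have huv := uPar_mul_conj hp
  have hττ : (τ * starRingEnd ℂ τ) ^ 2 = 3 * (τ * starRingEnd ℂ τ) - 1 := by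
    rw [Complex.mul_conj]
    exact_mod_cast hτ
  have h11 : coroot1 p τ ⬝ᵥ Pi.single 0 1 = uPar p ^ 2 - starRingEnd ℂ (uPar p) := by
    simp [coroot1]
  have h33 : coroot3 p τ ⬝ᵥ Pi.single 2 1 = uPar p ^ 2 - starRingEnd ℂ (uPar p) := by
    simp [coroot3]
  have h13 : coroot1 p τ ⬝ᵥ Pi.single 2 1 = -(uPar p) * starRingEnd ℂ τ := by simp [coroot1]
  have h31 : coroot3 p τ ⬝ᵥ Pi.single 0 1 = τ := by simp [coroot3]
  rw [R1S_eq_smul_one_add_vecMulVec, R3S_eq_smul_one_add_vecMulVec]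
  refine semiconjBy_mul_sq_of_temperleyLieb
    (d := uPar p ^ 2 - starRingEnd ℂ (uPar p)) (κ := -(uPar p) * (τ * starRingEnd ℂ τ))
    ?_ ?_ ?_ ?_ ?_
  · simp [vecMulVec_mul_self, h11]
  · simp [vecMulVec_mul_self, h33]
  · rw [vecMulVec_mul_vecMulVec_mul_self, h13, h31, mul_assoc, mul_comm (starRingEnd ℂ τ)]
  · rw [vecMulVec_mul_vecMulVec_mul_self, h13, h31, mul_comm, mul_assoc, mul_comm (starRingEnd ℂ τ)]
  · set u := uPar p
    set v := starRingEnd ℂ u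
    set t := τ * starRingEnd ℂ τ
    have hvu : v * (v + (u ^ 2 - v)) = u := by linear_combination u * huv
    linear_combination u ^ 2 * hττ + (v * (v + (u ^ 2 - v)) + u - 3 * u * t) * hvu

theorem lfun_eq_mul_coroot1_dotProduct (hp : p ≠ 0) (x : Fin 3 → ℂ) :
    lfun (alphaPar p) (betaPar p τ) (starRingEnd ℂ (betaPar p τ)) x =
      (starRingEnd ℂ (uPar p) ^ 2 - uPar p) * (coroot1 p τ ⬝ᵥ x) := by
  have huv := uPar_mul_conj hp
  simp only [lfun, alphaPar, betaPar, coroot1, vec3_dotProduct, cons_val, LinearMap.add_apply,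
    LinearMap.smul_apply, LinearMap.proj_apply, smul_eq_mul, map_mul, map_sub, map_pow,
    Complex.conj_conj]
  set u := uPar p
  set v := starRingEnd ℂ u
  linear_combination (-(u * v + 2) * x 0 + v * starRingEnd ℂ τ * x 2) * huv

theorem mirror1_eq_eigenspace (hp : 2 ≤ p) :
    mirror1 p τ = Module.End.eigenspace (R1S p τ).mulVecLin (starRingEnd ℂ (uPar p)) := by
  ext x
  rw [mirror1, LinearMap.mem_ker, lfun_eq_mul_coroot1_dotProduct (by omega),
    Module.End.mem_eigenspace_iff, mulVecLin_apply, R1S_eq_smul_one_add_vecMulVec, add_mulVec,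
    smul_mulVec, one_mulVec, vecMulVec_mulVec, add_eq_left]
  simp [sub_ne_zero.2 (conj_sq_ne_uPar hp)]

end Reflections

section Stabilizers

variable {S : Subgroup (GL (Fin 3) ℂ)} {g : GL (Fin 3) ℂ}

theorem mem_mirrorStab_mirror1_of_commute {p : ℕ} {τ : ℂ} (hp : 2 ≤ p) (hg : g ∈ S)
    (h : Commute (g : Matrix (Fin 3) (Fin 3) ℂ) (R1S p τ)) :
    g ∈ mirrorStab S (mirror1 p τ) := by
  refine ⟨hg, map_mulVecLin_eq_of_le g ?_⟩
  rw [mirror1_eq_eigenspace hp]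
  exact map_eigenspace_le_of_commute h _

theorem mem_mirrorStab_span_single_zero_two (hg : g ∈ S) (h0 : g 1 0 = 0) (h2 : g 1 2 = 0) :
    g ∈ mirrorStab S (Submodule.span ℂ {Pi.single 0 1, Pi.single 2 1}) :=
  ⟨hg, map_mulVecLin_eq_of_le g (map_span_single_zero_two_le h0 h2)⟩

end Stabilizers

theorem coe_inv_mul_mul_eq_R3S {p : ℕ} {τ : ℂ} {r₁ j : GL (Fin 3) ℂ}
    (hr₁ : (r₁ : Matrix (Fin 3) (Fin 3) ℂ) = R1S p τ)
    (hj : (j : Matrix (Fin 3) (Fin 3) ℂ) = Jmat) :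
    ((j⁻¹ * r₁ * j : GL (Fin 3) ℂ) : Matrix (Fin 3) (Fin 3) ℂ) = R3S p τ := by
  rw [mul_assoc, Units.val_mul, Units.inv_mul_eq_iff_eq_mul, Units.val_mul, hr₁, hj]
  exact (semiconjBy_Jmat_R3S_R1S p τ).eq.symm

theorem normSq_goldenRatio_sq :
    Complex.normSq (Real.goldenRatio : ℂ) ^ 2 =
      3 * Complex.normSq (Real.goldenRatio : ℂ) - 1 := by
  rw [Complex.normSq_ofReal]
  linear_combination (Real.goldenRatio ^ 2 + Real.goldenRatio - 1) * Real.goldenRatio_sq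

theorem stmt17_general (p : ℕ) (hp : 2 ≤ p) (τ : ℂ) (n : ℕ)
    (hbraid : SemiconjBy ((R1S p τ * R3S p τ) ^ n) (R1S p τ) (R3S p τ))
    (r₁ j : GL (Fin 3) ℂ)
    (hr₁ : (↑r₁ : Matrix (Fin 3) (Fin 3) ℂ) = R1S p τ)
    (hj : (↑j : Matrix (Fin 3) (Fin 3) ℂ) = Jmat) :
    Subgroup.closure
        (mirrorStab (Subgroup.closure {r₁, j}) (mirror1 p τ) ∪
          mirrorStab (Subgroup.closure {r₁, j})
            (Submodule.span ℂ
              {Pi.single 0 1, Pi.single 2 1})) =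
      Subgroup.closure {r₁, j} := by
  set S := Subgroup.closure {r₁, j}
  set T := Subgroup.closure (mirrorStab S (mirror1 p τ) ∪ mirrorStab S _)
  have hr₁S : r₁ ∈ S := Subgroup.subset_closure (by simp)
  have hjS : j ∈ S := Subgroup.subset_closure (by simp)
  set r₃ := j⁻¹ * r₁ * j
  have hr₃ : (r₃ : Matrix (Fin 3) (Fin 3) ℂ) = R3S p τ := coe_inv_mul_mul_eq_R3S hr₁ hj
  have hr₃S : r₃ ∈ S := S.mul_mem (S.mul_mem (S.inv_mem hjS) hr₁S) hjS
  have hr₁T : r₁ ∈ T := Subgroup.subset_closure <| .inr <|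
    mem_mirrorStab_span_single_zero_two hr₁S (by simp [hr₁, R1S]) (by simp [hr₁, R1S])
  have hr₃T : r₃ ∈ T := Subgroup.subset_closure <| .inr <|
    mem_mirrorStab_span_single_zero_two hr₃S (by simp [hr₃, R3S]) (by simp [hr₃, R3S])
  have hcomm : Commute ((j * (r₁ * r₃) ^ n : GL (Fin 3) ℂ) : Matrix (Fin 3) (Fin 3) ℂ)
      (R1S p τ) := by
    rw [Units.val_mul, Units.val_pow_eq_pow_val, Units.val_mul, hj, hr₁, hr₃]
    exact (semiconjBy_Jmat_R3S_R1S p τ).mul_left hbraid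
  have hmT : j * (r₁ * r₃) ^ n ∈ T := Subgroup.subset_closure <| .inl <|
    mem_mirrorStab_mirror1_of_commute hp
      (S.mul_mem hjS (S.pow_mem (S.mul_mem hr₁S hr₃S) n)) hcomm
  have hjT : j ∈ T := (T.mul_mem_cancel_right (T.pow_mem (T.mul_mem hr₁T hr₃T) n)).1 hmT
  apply le_antisymm
  · exact (Subgroup.closure_le S).2 (Set.union_subset (fun _ hg => hg.1) fun _ hg => hg.1)
  · exact (Subgroup.closure_le T).2 (Set.pair_subset hr₁T hjT)

/-- For `τ = (1+√5)/2` and `p ∈ {4,5,10}`, the lattice `S(p,τ)` is generated by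
the union of the stabilizers of the mirror of `R₁` and of the mirror
`span{e₁, e₃}` of the complex reflection `(R₁R₃)⁵`. -/
theorem stmt17 (p : ℕ) (hp : p = 4 ∨ p = 5 ∨ p = 10)
    (τ : ℂ) (hτ : τ = (1 + Real.sqrt 5) / 2)
    (r₁ j : GL (Fin 3) ℂ)
    (hr₁ : (↑r₁ : Matrix (Fin 3) (Fin 3) ℂ) = R1S p τ)
    (hj : (↑j : Matrix (Fin 3) (Fin 3) ℂ) = Jmat) :
    Subgroup.closure
        (mirrorStab (Subgroup.closure {r₁, j}) (mirror1 p τ) ∪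
          mirrorStab (Subgroup.closure {r₁, j})
            (Submodule.span ℂ
              {Pi.single 0 1, Pi.single 2 1})) =
      Subgroup.closure {r₁, j} := by
  have hφ : τ = (Real.goldenRatio : ℂ) := by rw [hτ]; norm_num [Real.goldenRatio]
  exact stmt17_general p (by omega) τ 2
    (semiconjBy_R1S_mul_R3S_sq (by omega) (hφ ▸ normSq_goldenRatio_sq)) r₁ j hr₁ hj
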